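/- Let 𝕋 be a time scale admitting a maximum t₀ = max 𝕋. Then for every k ∈ ℕ and every t ∈ 𝕋, ∫_{[t,t₀)_𝕋} (t₀ − σ(τ))^k Δτ ≤ (t₀ − t)^{k+1}/(k+1). -/

import Mathlib

/-!
The `Δ`-integral is compared with an ordinary Lebesgue integral. Put `g x = (t₀ - x) ^ k`, which is
nonnegative and decreasing on `[t, t₀)`. Since `τ ≤ σ(τ) ≤ t₀` on `T`, the integrand
`(t₀ - σ(τ)) ^ k` is at most `g τ`, so the Lebesgue part of the `Δ`-integral is at most the integral
of `g` over `[t, t₀) ∩ T`. At a right-scattered point `r` the atom contributes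
`μ(r) (t₀ - σ(r)) ^ k`, which is at most the integral of `g` over the gap `(r, σ(r))`
(`atom_le_lintegral_gap`). The gaps are pairwise disjoint, lie outside `T`, and are contained in
`[t, t₀)` when `r ∈ [t, t₀)`. Both parts together are thus at most
`∫_t^{t₀} (t₀ - x) ^ k dx = (t₀ - t) ^ (k + 1) / (k + 1)`.

The comparison is carried out with lower Lebesgue integrals (`lintegral_delta_le`), which need no
measurability of `σ`.
-/

open MeasureTheory Set Filter Classical

noncomputable section
open scoped Classical

/-- The forward jump operator `σ` of a time scale `T`. -/
def tsSigma (T : Set ℝ) (t : ℝ) : ℝ :=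
  if ({s | s ∈ T ∧ t < s}).Nonempty then sInf {s | s ∈ T ∧ t < s} else t

/-- The backward jump operator `ρ` of a time scale `T`. -/
def tsRho (T : Set ℝ) (t : ℝ) : ℝ :=
  if ({s | s ∈ T ∧ s < t}).Nonempty then sSup {s | s ∈ T ∧ s < t} else t

/-- The graininess function `μ(t) = σ(t) - t`. -/
def tsGrain (T : Set ℝ) (t : ℝ) : ℝ := tsSigma T t - t

/-- `t` is a right-scattered point of `T`. -/
def RightScattered (T : Set ℝ) (t : ℝ) : Prop := t < tsSigma T t

/-- `t` is a right-dense point of `T`. -/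
def RightDense (T : Set ℝ) (t : ℝ) : Prop := tsSigma T t = t

/-- `t` is a left-scattered point of `T`. -/
def LeftScattered (T : Set ℝ) (t : ℝ) : Prop := tsRho T t < t

/-- `t` is a left-dense point of `T`. -/
def LeftDense (T : Set ℝ) (t : ℝ) : Prop := tsRho T t = t

/-- `𝕋 \ {sup 𝕋}`: the time scale minus its maximum (if the maximum exists). -/
def tsUpDomain (T : Set ℝ) : Set ℝ := {t | t ∈ T ∧ ¬ IsGreatest T t}

/-- The Lebesgue Δ-measure on the time scale `T`: Lebesgue measure restricted to `T`
plus `Σ_{r ∈ ℛ} μ(r)·δ_r` over right-scattered points `r`. -/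
def deltaMeasure (T : Set ℝ) : Measure ℝ :=
  volume.restrict T +
    Measure.sum (fun r : {t : ℝ // t ∈ T ∧ RightScattered T t} =>
      ENNReal.ofReal (tsGrain T r.1) • Measure.dirac r.1)

/-- Δ-differentiability of `q` at `t`, with Δ-derivative `q'`. -/
def HasDeltaDerivAt {n : ℕ} (T : Set ℝ) (q : ℝ → EuclideanSpace ℝ (Fin n))
    (q' : EuclideanSpace ℝ (Fin n)) (t : ℝ) : Prop :=
  ∀ ε > (0:ℝ), ∃ U ∈ nhds t, ∀ s ∈ U ∩ T,
    ‖q (tsSigma T t) - q s - (tsSigma T t - s) • q'‖ ≤ ε * |tsSigma T t - s|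

/-- Absolute continuity of `q` on `[a,b]_𝕋`. -/
def DeltaAC {n : ℕ} (T : Set ℝ) (a b : ℝ) (q : ℝ → EuclideanSpace ℝ (Fin n)) : Prop :=
  ∀ ε > (0:ℝ), ∃ δ > (0:ℝ), ∀ (m : ℕ) (u v : ℕ → ℝ),
    (∀ k < m, u k ∈ Icc a b ∩ T) → (∀ k < m, v k ∈ Icc a b ∩ T) →
    (∀ k < m, u k ≤ v k) →
    (∀ i < m, ∀ j < m, i ≠ j → Disjoint (Icc (u i) (v i)) (Icc (u j) (v j))) →
    (∑ k ∈ Finset.range m, (v k - u k)) < δ →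
    (∑ k ∈ Finset.range m, ‖q (v k) - q (u k)‖) < ε

/-- `f` is a Δ-Carathéodory function on `Ω × 𝕋\{sup 𝕋}`. -/
def DeltaCaratheodory {n : ℕ} (T : Set ℝ) (Ω : Set (EuclideanSpace ℝ (Fin n)))
    (f : EuclideanSpace ℝ (Fin n) → ℝ → EuclideanSpace ℝ (Fin n)) : Prop :=
  (∀ x ∈ Ω, AEMeasurable (fun t => f x t) ((deltaMeasure T).restrict (tsUpDomain T))) ∧
    ∀ᵐ t ∂((deltaMeasure T).restrict (tsUpDomain T)), ContinuousOn (fun x => f x t) Ω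

/-- Hypothesis (H∞): `f` is locally bounded. -/
def HInfty {n : ℕ} (T : Set ℝ) (Ω : Set (EuclideanSpace ℝ (Fin n)))
    (f : EuclideanSpace ℝ (Fin n) → ℝ → EuclideanSpace ℝ (Fin n)) : Prop :=
  ∀ K : Set (EuclideanSpace ℝ (Fin n)), K ⊆ Ω → IsCompact K →
    ∀ a ∈ T, ∀ b ∈ T, a < b →
      ∃ M : ℝ, 0 ≤ M ∧
        ∀ᵐ t ∂((deltaMeasure T).restrict (Ico a b ∩ T)), ∀ x ∈ K, ‖f x t‖ ≤ M

/-- Hypothesis (H^rd_loc-Lip): local Lipschitz continuity at right-dense points. -/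
def HrdLocLip {n : ℕ} (T : Set ℝ) (Ω : Set (EuclideanSpace ℝ (Fin n)))
    (f : EuclideanSpace ℝ (Fin n) → ℝ → EuclideanSpace ℝ (Fin n)) : Prop :=
  ∀ xb ∈ Ω, ∀ tb ∈ T, ¬ IsGreatest T tb → RightDense T tb →
    ∃ R > (0:ℝ), ∃ δ > (0:ℝ), ∃ L : ℝ, 0 ≤ L ∧
      Metric.closedBall xb R ⊆ Ω ∧ tb + δ ∈ T ∧
      ∀ᵐ t ∂((deltaMeasure T).restrict (Ico tb (tb + δ) ∩ T)),
        ∀ x₁ ∈ Metric.closedBall xb R, ∀ x₂ ∈ Metric.closedBall xb R,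
          ‖f x₁ t - f x₂ t‖ ≤ L * ‖x₁ - x₂‖

/-- Hypothesis (H^ld_loc-Lip): local Lipschitz continuity at left-dense points. -/
def HldLocLip {n : ℕ} (T : Set ℝ) (Ω : Set (EuclideanSpace ℝ (Fin n)))
    (f : EuclideanSpace ℝ (Fin n) → ℝ → EuclideanSpace ℝ (Fin n)) : Prop :=
  ∀ xb ∈ Ω, ∀ tb ∈ T, ¬ IsLeast T tb → LeftDense T tb →
    ∃ R > (0:ℝ), ∃ δ > (0:ℝ), ∃ L : ℝ, 0 ≤ L ∧
      Metric.closedBall xb R ⊆ Ω ∧ tb - δ ∈ T ∧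
      ∀ᵐ t ∂((deltaMeasure T).restrict (Ico (tb - δ) tb ∩ T)),
        ∀ x₁ ∈ Metric.closedBall xb R, ∀ x₂ ∈ Metric.closedBall xb R,
          ‖f x₁ t - f x₂ t‖ ≤ L * ‖x₁ - x₂‖

/-- Hypothesis (H^forw_stab): `G⁺(t) : x ↦ x + μ(t) f(x,t)` maps `Ω` into `Ω`. -/
def HforwStab {n : ℕ} (T : Set ℝ) (Ω : Set (EuclideanSpace ℝ (Fin n)))
    (f : EuclideanSpace ℝ (Fin n) → ℝ → EuclideanSpace ℝ (Fin n)) : Prop :=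
  ∀ t ∈ T, RightScattered T t → ∀ x ∈ Ω, x + tsGrain T t • f x t ∈ Ω

/-- Hypothesis (H^back_regr): `G⁺(t)` is a bijection from `Ω` onto `ℝⁿ`. -/
def HbackRegr {n : ℕ} (T : Set ℝ) (Ω : Set (EuclideanSpace ℝ (Fin n)))
    (f : EuclideanSpace ℝ (Fin n) → ℝ → EuclideanSpace ℝ (Fin n)) : Prop :=
  ∀ t ∈ T, RightScattered T t → Set.BijOn (fun x => x + tsGrain T t • f x t) Ω univ

/-- Hypothesis (H^back_stab): `G⁻(t) : x ↦ x - μ(t) f(x,t)` maps `Ω` into `Ω`. -/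
def HbackStab {n : ℕ} (T : Set ℝ) (Ω : Set (EuclideanSpace ℝ (Fin n)))
    (f : EuclideanSpace ℝ (Fin n) → ℝ → EuclideanSpace ℝ (Fin n)) : Prop :=
  ∀ t ∈ T, RightScattered T t → ∀ x ∈ Ω, x - tsGrain T t • f x t ∈ Ω

/-- Hypothesis (H^forw_regr): `G⁻(t)` is a bijection from `Ω` onto `ℝⁿ`. -/
def HforwRegr {n : ℕ} (T : Set ℝ) (Ω : Set (EuclideanSpace ℝ (Fin n)))
    (f : EuclideanSpace ℝ (Fin n) → ℝ → EuclideanSpace ℝ (Fin n)) : Prop :=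
  ∀ t ∈ T, RightScattered T t → Set.BijOn (fun x => x - tsGrain T t • f x t) Ω univ

/-- Hypothesis (H^glob_Lip): global Lipschitz continuity. -/
def HglobLip {n : ℕ} (T : Set ℝ) (Ω : Set (EuclideanSpace ℝ (Fin n)))
    (f : EuclideanSpace ℝ (Fin n) → ℝ → EuclideanSpace ℝ (Fin n)) : Prop :=
  ∃ L : ℝ, 0 ≤ L ∧
    ∀ᵐ t ∂((deltaMeasure T).restrict (tsUpDomain T)),
      ∀ x₁ ∈ Ω, ∀ x₂ ∈ Ω, ‖f x₁ t - f x₂ t‖ ≤ L * ‖x₁ - x₂‖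

/-- The relation `a ⊴ t₀ ⊴ b`. -/
def Trile (T : Set ℝ) (t₀ a b : ℝ) : Prop :=
  (IsLeast T t₀ ∧ a = t₀ ∧ t₀ < b) ∨
  (IsGreatest T t₀ ∧ a < t₀ ∧ t₀ = b) ∨
  (¬ IsLeast T t₀ ∧ ¬ IsGreatest T t₀ ∧ a < t₀ ∧ t₀ < b)

/-- `(q, [a,b]_𝕋)` is a solution of the non shifted Δ-Cauchy problem (Δ-CP). -/
def IsSolIcc {n : ℕ} (T : Set ℝ) (Ω : Set (EuclideanSpace ℝ (Fin n)))
    (f : EuclideanSpace ℝ (Fin n) → ℝ → EuclideanSpace ℝ (Fin n))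
    (t₀ : ℝ) (q₀ : EuclideanSpace ℝ (Fin n))
    (q : ℝ → EuclideanSpace ℝ (Fin n)) (a b : ℝ) : Prop :=
  (∀ t ∈ Icc a b ∩ T, q t ∈ Ω) ∧ DeltaAC T a b q ∧ q t₀ = q₀ ∧
    ∀ᵐ t ∂((deltaMeasure T).restrict (Ico a b ∩ T)),
      HasDeltaDerivAt T q (f (q t) t) t

/-- `(q, [a,b]_𝕋)` is a solution of the shifted Δ-Cauchy problem (Δ-CP^σ). -/
def IsSolIccS {n : ℕ} (T : Set ℝ) (Ω : Set (EuclideanSpace ℝ (Fin n)))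
    (f : EuclideanSpace ℝ (Fin n) → ℝ → EuclideanSpace ℝ (Fin n))
    (t₀ : ℝ) (q₀ : EuclideanSpace ℝ (Fin n))
    (q : ℝ → EuclideanSpace ℝ (Fin n)) (a b : ℝ) : Prop :=
  (∀ t ∈ Icc a b ∩ T, q t ∈ Ω) ∧ DeltaAC T a b q ∧ q t₀ = q₀ ∧
    ∀ᵐ t ∂((deltaMeasure T).restrict (Ico a b ∩ T)),
      HasDeltaDerivAt T q (f (q (tsSigma T t)) t) t

/-- `I_𝕋 ∈ 𝕀`: `I` is a real interval containing points `a, b` of `T` with `a ⊴ t₀ ⊴ b`. -/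
def MemI (T : Set ℝ) (t₀ : ℝ) (I : Set ℝ) : Prop :=
  I.OrdConnected ∧ ∃ a ∈ I ∩ T, ∃ b ∈ I ∩ T, Trile T t₀ a b

/-- `(q, I_𝕋)` is a solution of (Δ-CP). -/
def IsSol {n : ℕ} (T : Set ℝ) (Ω : Set (EuclideanSpace ℝ (Fin n)))
    (f : EuclideanSpace ℝ (Fin n) → ℝ → EuclideanSpace ℝ (Fin n))
    (t₀ : ℝ) (q₀ : EuclideanSpace ℝ (Fin n))
    (q : ℝ → EuclideanSpace ℝ (Fin n)) (I : Set ℝ) : Prop :=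
  MemI T t₀ I ∧ (∀ t ∈ I ∩ T, q t ∈ Ω) ∧
    ∀ a ∈ I ∩ T, ∀ b ∈ I ∩ T, Trile T t₀ a b → IsSolIcc T Ω f t₀ q₀ q a b

/-- `(q, I_𝕋)` is a solution of (Δ-CP^σ). -/
def IsSolS {n : ℕ} (T : Set ℝ) (Ω : Set (EuclideanSpace ℝ (Fin n)))
    (f : EuclideanSpace ℝ (Fin n) → ℝ → EuclideanSpace ℝ (Fin n))
    (t₀ : ℝ) (q₀ : EuclideanSpace ℝ (Fin n))
    (q : ℝ → EuclideanSpace ℝ (Fin n)) (I : Set ℝ) : Prop :=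
  MemI T t₀ I ∧ (∀ t ∈ I ∩ T, q t ∈ Ω) ∧
    ∀ a ∈ I ∩ T, ∀ b ∈ I ∩ T, Trile T t₀ a b → IsSolIccS T Ω f t₀ q₀ q a b

/-- `(q₁, I₁_𝕋)` is an extension of `(q, I_𝕋)`. -/
def SolExtends {n : ℕ} (T : Set ℝ) (q₁ : ℝ → EuclideanSpace ℝ (Fin n)) (I₁ : Set ℝ)
    (q : ℝ → EuclideanSpace ℝ (Fin n)) (I : Set ℝ) : Prop :=
  I ∩ T ⊆ I₁ ∩ T ∧ EqOn q₁ q (I ∩ T)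

/-- `(q, I_𝕋)` is a maximal solution of (Δ-CP). -/
def IsMaxSol {n : ℕ} (T : Set ℝ) (Ω : Set (EuclideanSpace ℝ (Fin n)))
    (f : EuclideanSpace ℝ (Fin n) → ℝ → EuclideanSpace ℝ (Fin n))
    (t₀ : ℝ) (q₀ : EuclideanSpace ℝ (Fin n))
    (q : ℝ → EuclideanSpace ℝ (Fin n)) (I : Set ℝ) : Prop :=
  IsSol T Ω f t₀ q₀ q I ∧
    ∀ q₁ I₁, IsSol T Ω f t₀ q₀ q₁ I₁ → SolExtends T q₁ I₁ q I → I₁ ∩ T = I ∩ T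

/-- `(q, I_𝕋)` is a maximal solution of (Δ-CP^σ). -/
def IsMaxSolS {n : ℕ} (T : Set ℝ) (Ω : Set (EuclideanSpace ℝ (Fin n)))
    (f : EuclideanSpace ℝ (Fin n) → ℝ → EuclideanSpace ℝ (Fin n))
    (t₀ : ℝ) (q₀ : EuclideanSpace ℝ (Fin n))
    (q : ℝ → EuclideanSpace ℝ (Fin n)) (I : Set ℝ) : Prop :=
  IsSolS T Ω f t₀ q₀ q I ∧
    ∀ q₁ I₁, IsSolS T Ω f t₀ q₀ q₁ I₁ → SolExtends T q₁ I₁ q I → I₁ ∩ T = I ∩ T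

theorem le_tsSigma (T : Set ℝ) (τ : ℝ) : τ ≤ tsSigma T τ := by
  unfold tsSigma
  split_ifs with h
  · exact le_csInf h fun s hs => hs.2.le
  · exact le_rfl

theorem tsSigma_le {T : Set ℝ} {τ s : ℝ} (hs : s ∈ T) (h : τ < s) : tsSigma T τ ≤ s := by
  unfold tsSigma
  have hne : ({s | s ∈ T ∧ τ < s}).Nonempty := ⟨s, hs, h⟩
  rw [if_pos hne]
  exact csInf_le ⟨τ, fun x hx => hx.2.le⟩ ⟨hs, h⟩

theorem gap_subset_compl (T : Set ℝ) (τ : ℝ) : Ioo τ (tsSigma T τ) ⊆ Tᶜ :=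
  fun _ hx hxT => (tsSigma_le hxT hx.1).not_gt hx.2

theorem pairwiseDisjoint_gaps (T : Set ℝ) :
    {t : ℝ | t ∈ T ∧ RightScattered T t}.PairwiseDisjoint (fun r => Ioo r (tsSigma T r)) := by
  intro a ha b hb hab
  rw [Function.onFun, Set.disjoint_left]
  rintro x ⟨hx1, hx2⟩ ⟨hx3, hx4⟩
  rcases lt_or_gt_of_ne hab with h | h
  · linarith [tsSigma_le hb.1 h]
  · linarith [tsSigma_le ha.1 h]

/-- The mass of the atom at `r` times the integrand is at most the Lebesgue integral over the gap
`(r, σ(r))`, because `x ↦ (t₀ - x) ^ k` is decreasing there. -/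
theorem atom_le_lintegral_gap {T : Set ℝ} {t₀ : ℝ} (ht₀ : t₀ ∈ T) (k : ℕ) {t r : ℝ}
    (hr : r ∈ Ico t t₀) :
    ENNReal.ofReal (tsGrain T r) * ENNReal.ofReal ((t₀ - tsSigma T r) ^ k) ≤
      ∫⁻ x in Ioo r (tsSigma T r),
        (Ico t t₀).indicator (fun x => ENNReal.ofReal ((t₀ - x) ^ k)) x := by
  have hσ : tsSigma T r ≤ t₀ := tsSigma_le ht₀ hr.2
  calc ENNReal.ofReal (tsGrain T r) * ENNReal.ofReal ((t₀ - tsSigma T r) ^ k)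
      = ∫⁻ _ in Ioo r (tsSigma T r), ENNReal.ofReal ((t₀ - tsSigma T r) ^ k) := by
        rw [setLIntegral_const, Real.volume_Ioo, mul_comm, tsGrain]
    _ ≤ _ := by
        refine setLIntegral_mono' measurableSet_Ioo fun x hx => ?_
        have hx' : x ∈ Ico t t₀ := ⟨hr.1.trans hx.1.le, hx.2.trans_le hσ⟩
        rw [indicator_of_mem hx']
        refine ENNReal.ofReal_le_ofReal (pow_le_pow_left₀ (by linarith) ?_ k)
        linarith [hx.2]

theorem lintegral_delta_le {T : Set ℝ} (hT : IsClosed T) {t₀ : ℝ} (ht₀ : t₀ ∈ T) (k : ℕ) (t : ℝ) :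
    ∫⁻ τ in Ico t t₀ ∩ T, ENNReal.ofReal ((t₀ - tsSigma T τ) ^ k) ∂(deltaMeasure T) ≤
      ∫⁻ x in Ico t t₀, ENNReal.ofReal ((t₀ - x) ^ k) := by
  have hA : MeasurableSet (Ico t t₀ ∩ T) := measurableSet_Ico.inter hT.measurableSet
  set H : ℝ → ENNReal := (Ico t t₀).indicator fun x => ENNReal.ofReal ((t₀ - x) ^ k) with hH
  have hcount : Countable {t : ℝ // t ∈ T ∧ RightScattered T t} :=
    ((pairwiseDisjoint_gaps T).countable_of_Ioo fun _ hr => hr.2).to_subtype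
  rw [← lintegral_indicator hA, deltaMeasure, lintegral_add_measure, lintegral_sum_measure,
    ← lintegral_indicator measurableSet_Ico, ← hH, ← lintegral_add_compl H hT.measurableSet]
  refine add_le_add (lintegral_mono fun x => ?_) ?_
  · by_cases hx : x ∈ Ico t t₀ ∩ T
    · rw [indicator_of_mem hx, hH, indicator_of_mem hx.1]
      have h1 := tsSigma_le ht₀ hx.1.2
      have h2 := le_tsSigma T x
      exact ENNReal.ofReal_le_ofReal (pow_le_pow_left₀ (by linarith) (by linarith) k)
    · rw [indicator_of_notMem hx]
      exact zero_le
  · calc _ ≤ ∑' r : {t : ℝ // t ∈ T ∧ RightScattered T t}, ∫⁻ x in Ioo r.1 (tsSigma T r.1), H x := by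
          refine ENNReal.tsum_le_tsum fun r => ?_
          rw [lintegral_smul_measure, lintegral_dirac, smul_eq_mul]
          by_cases hr : r.1 ∈ Ico t t₀ ∩ T
          · rw [indicator_of_mem hr]
            exact atom_le_lintegral_gap ht₀ k hr.1
          · rw [indicator_of_notMem hr, mul_zero]
            exact zero_le
      _ = ∫⁻ x in ⋃ r : {t : ℝ // t ∈ T ∧ RightScattered T t}, Ioo r.1 (tsSigma T r.1), H x := by
          refine (lintegral_iUnion (fun _ => measurableSet_Ioo) (fun a b hab => ?_) H).symm
          exact pairwiseDisjoint_gaps T a.2 b.2 fun h => hab (Subtype.ext h)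
      _ ≤ ∫⁻ x in Tᶜ, H x :=
          lintegral_mono_set (iUnion_subset fun r => gap_subset_compl T r.1)

theorem lintegral_Ico_sub_pow {t t₀ : ℝ} (h : t ≤ t₀) (k : ℕ) :
    ∫⁻ x in Ico t t₀, ENNReal.ofReal ((t₀ - x) ^ k) =
      ENNReal.ofReal ((t₀ - t) ^ (k + 1) / (k + 1)) := by
  have hint : IntegrableOn (fun x : ℝ => (t₀ - x) ^ k) (Ico t t₀) :=
    ((by fun_prop : Continuous fun x : ℝ => (t₀ - x) ^ k).integrableOn_Icc).mono_set
      Ico_subset_Icc_self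
  have hnn : 0 ≤ᵐ[volume.restrict (Ico t t₀)] fun x : ℝ => (t₀ - x) ^ k :=
    (ae_restrict_iff' measurableSet_Ico).2 <| .of_forall fun x hx =>
      pow_nonneg (sub_nonneg.2 hx.2.le) k
  rw [← ofReal_integral_eq_lintegral_ofReal hint hnn, integral_Ico_eq_integral_Ioc,
    ← intervalIntegral.integral_of_le h,
    intervalIntegral.integral_comp_sub_left (fun y : ℝ => y ^ k) t₀, integral_pow]
  simp

theorem stmt16 (T : Set ℝ) (hTclosed : IsClosed T) (hTnontriv : T.Nontrivial)
    (t₀ : ℝ) (hmax : IsGreatest T t₀) (k : ℕ) (t : ℝ) (ht : t ∈ T) :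
    ∫ τ in Ico t t₀ ∩ T, (t₀ - tsSigma T τ) ^ k ∂(deltaMeasure T)
      ≤ (t₀ - t) ^ (k + 1) / (k + 1) := by
  have htt : t ≤ t₀ := hmax.2 ht
  have hnn : 0 ≤ (t₀ - t) ^ (k + 1) / ((k : ℝ) + 1) :=
    div_nonneg (pow_nonneg (sub_nonneg.2 htt) _) (by positivity)
  have hA : MeasurableSet (Ico t t₀ ∩ T) := measurableSet_Ico.inter hTclosed.measurableSet
  -- This bound on the Bochner integral holds without measurability of the integrand: the integral
  -- is `0` when the integrand is not integrable.
  refine (Real.le_norm_self _).trans ((norm_integral_le_lintegral_norm _).trans ?_)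
  refine ENNReal.toReal_le_of_le_ofReal hnn ?_
  rw [← lintegral_Ico_sub_pow htt k]
  refine le_trans (le_of_eq ?_) (lintegral_delta_le hTclosed hmax.1 k t)
  refine setLIntegral_congr_fun hA fun τ hτ => ?_
  have hσ := tsSigma_le hmax.1 hτ.1.2
  simp only [Real.norm_of_nonneg (pow_nonneg (sub_nonneg.2 hσ) k)]

end
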